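/- Let λ ∈ ℝ, let V = (V_{ij}) be a 3×3 matrix of smooth real functions on ℝ², and let Φ = (φ1, φ2, φ3) : ℝ² → ℝ³ be smooth with φ3 nowhere vanishing, satisfying ∂ₓφ1 = λ m1 φ2 + φ3, ∂ₓφ2 = λ n1 φ1 + λ m2 φ3, ∂ₓφ3 = φ1 + λ n2 φ2, together with ∂ₜΦ = V Φ. Set α = φ1/φ3, β = φ2/φ3 and ρ̂ = α + λ n2 β. Then: (i) ∂ₓφ3 = ρ̂ φ3; (ii) ∂ₓα = λ m1 β + 1 − α ρ̂; (iii) ∂ₓβ = λ n1 α + λ m2 − β ρ̂; (iv) ∂ₜρ̂ = ∂ₓ(V₃₁ α + V₃₂ β + V₃₃) identically on ℝ². -/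

import Mathlib

/-- Partial derivative with respect to the first (space) variable. -/
noncomputable def pX (f : ℝ × ℝ → ℝ) : ℝ × ℝ → ℝ :=
  fun p => deriv (fun x => f (x, p.2)) p.1

/-- Partial derivative with respect to the second (time) variable. -/
noncomputable def pT (f : ℝ × ℝ → ℝ) : ℝ × ℝ → ℝ :=
  fun p => deriv (fun t => f (p.1, t)) p.2

/-!
The `x`-equation for `φ3` says that `ρ = ∂ₓφ3 / φ3`, and its `t`-equation says that
`V₃₁ α + V₃₂ β + V₃₃ = ∂ₜφ3 / φ3`. The conservation law is therefore the equality of the mixed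
partials of `log |φ3|`, and the two Riccati equations are the quotient rule for `φ1 / φ3` and
`φ2 / φ3`.
-/

open Filter Topology

section Slices

variable {𝕜 E F G : Type*} [NontriviallyNormedField 𝕜]
  [NormedAddCommGroup E] [NormedSpace 𝕜 E] [NormedAddCommGroup F] [NormedSpace 𝕜 F]
  [NormedAddCommGroup G] [NormedSpace 𝕜 G] {f : E × F → G} {p : E × F}

theorem hasFDerivAt_slice_left (hf : DifferentiableAt 𝕜 f p) :
    HasFDerivAt (fun x => f (x, p.2)) ((fderiv 𝕜 f p).comp (.inl 𝕜 E F)) p.1 :=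
  hf.hasFDerivAt.comp p.1 (hasFDerivAt_prodMk_left p.1 p.2)

theorem hasFDerivAt_slice_right (hf : DifferentiableAt 𝕜 f p) :
    HasFDerivAt (fun t => f (p.1, t)) ((fderiv 𝕜 f p).comp (.inr 𝕜 E F)) p.2 :=
  hf.hasFDerivAt.comp p.2 (hasFDerivAt_prodMk_right p.1 p.2)

end Slices

theorem fderiv_fderiv_apply_comm {𝕜 E F : Type*} [NontriviallyNormedField 𝕜]
    [NormedAddCommGroup E] [NormedSpace 𝕜 E] [NormedAddCommGroup F] [NormedSpace 𝕜 F]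
    {f : E → F} {x : E} (hf : DifferentiableAt 𝕜 (fderiv 𝕜 f) x)
    (hsymm : IsSymmSndFDerivAt 𝕜 f x) (v w : E) :
    fderiv 𝕜 (fun y => fderiv 𝕜 f y v) x w = fderiv 𝕜 (fun y => fderiv 𝕜 f y w) x v := by
  rw [fderiv_clm_apply hf (differentiableAt_const v),
    fderiv_clm_apply hf (differentiableAt_const w)]
  simpa using hsymm w v

section PartialDerivatives

variable {f g : ℝ × ℝ → ℝ} {p : ℝ × ℝ}

theorem pX_eq_fderiv (hf : DifferentiableAt ℝ f p) : pX f p = fderiv ℝ f p (1, 0) :=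
  (hasFDerivAt_slice_left hf).hasDerivAt.deriv

theorem pT_eq_fderiv (hf : DifferentiableAt ℝ f p) : pT f p = fderiv ℝ f p (0, 1) :=
  (hasFDerivAt_slice_right hf).hasDerivAt.deriv

theorem pX_congr_of_eventuallyEq (h : f =ᶠ[𝓝 p] g) : pX f p = pX g p :=
  EventuallyEq.deriv_eq <| h.comp_tendsto ((Continuous.prodMk_left p.2).tendsto p.1)

theorem pT_congr_of_eventuallyEq (h : f =ᶠ[𝓝 p] g) : pT f p = pT g p :=
  EventuallyEq.deriv_eq <| h.comp_tendsto ((Continuous.prodMk_right p.1).tendsto p.2)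

theorem pX_div (hf : DifferentiableAt ℝ f p) (hg : DifferentiableAt ℝ g p) (h0 : g p ≠ 0) :
    pX (fun q => f q / g q) p = pX f p / g p - f p / g p * (pX g p / g p) := by
  have quotient_rule : pX (fun q => f q / g q) p = (pX f p * g p - f p * pX g p) / g p ^ 2 :=
    deriv_fun_div (hasFDerivAt_slice_left hf).differentiableAt
      (hasFDerivAt_slice_left hg).differentiableAt h0
  rw [quotient_rule]
  field_simp

theorem pT_div (hf : DifferentiableAt ℝ f p) (hg : DifferentiableAt ℝ g p) (h0 : g p ≠ 0) :
    pT (fun q => f q / g q) p = pT f p / g p - f p / g p * (pT g p / g p) := by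
  have quotient_rule : pT (fun q => f q / g q) p = (pT f p * g p - f p * pT g p) / g p ^ 2 :=
    deriv_fun_div (hasFDerivAt_slice_right hf).differentiableAt
      (hasFDerivAt_slice_right hg).differentiableAt h0
  rw [quotient_rule]
  field_simp

theorem eventually_differentiableAt_of_contDiffAt_two (hf : ContDiffAt ℝ 2 f p) :
    ∀ᶠ q in 𝓝 p, DifferentiableAt ℝ f q :=
  (hf.eventually (by simp)).mono fun _ hq => hq.differentiableAt two_ne_zero

theorem pX_eventuallyEq_fderiv (hf : ContDiffAt ℝ 2 f p) :
    pX f =ᶠ[𝓝 p] fun q => fderiv ℝ f q (1, 0) :=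
  (eventually_differentiableAt_of_contDiffAt_two hf).mono fun _ => pX_eq_fderiv

theorem pT_eventuallyEq_fderiv (hf : ContDiffAt ℝ 2 f p) :
    pT f =ᶠ[𝓝 p] fun q => fderiv ℝ f q (0, 1) :=
  (eventually_differentiableAt_of_contDiffAt_two hf).mono fun _ => pT_eq_fderiv

theorem differentiableAt_fderiv_of_contDiffAt_two (hf : ContDiffAt ℝ 2 f p) :
    DifferentiableAt ℝ (fderiv ℝ f) p :=
  (hf.fderiv_right (m := 1) one_add_one_eq_two.le).differentiableAt one_ne_zero

theorem differentiableAt_pX (hf : ContDiffAt ℝ 2 f p) : DifferentiableAt ℝ (pX f) p :=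
  ((differentiableAt_fderiv_of_contDiffAt_two hf).clm_apply
    (differentiableAt_const _)).congr_of_eventuallyEq (pX_eventuallyEq_fderiv hf)

theorem differentiableAt_pT (hf : ContDiffAt ℝ 2 f p) : DifferentiableAt ℝ (pT f) p :=
  ((differentiableAt_fderiv_of_contDiffAt_two hf).clm_apply
    (differentiableAt_const _)).congr_of_eventuallyEq (pT_eventuallyEq_fderiv hf)

theorem pT_pX_comm (hf : ContDiffAt ℝ 2 f p) : pT (pX f) p = pX (pT f) p := by
  rw [pT_eq_fderiv (differentiableAt_pX hf), pX_eq_fderiv (differentiableAt_pT hf),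
    (pX_eventuallyEq_fderiv hf).fderiv_eq, (pT_eventuallyEq_fderiv hf).fderiv_eq]
  exact fderiv_fderiv_apply_comm (differentiableAt_fderiv_of_contDiffAt_two hf)
    (hf.isSymmSndFDerivAt (by simp)) (1, 0) (0, 1)

/-- Both sides are the mixed partial derivative of `log |f|`. -/
theorem pT_pX_div_eq_pX_pT_div (hf : ContDiffAt ℝ 2 f p) (h0 : f p ≠ 0) :
    pT (fun q => pX f q / f q) p = pX (fun q => pT f q / f q) p := by
  have hd : DifferentiableAt ℝ f p := hf.differentiableAt two_ne_zero
  rw [pT_div (differentiableAt_pX hf) hd h0, pX_div (differentiableAt_pT hf) hd h0,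
    pT_pX_comm hf, mul_comm]

theorem pT_eq_pX_of_eventually_eq_mul {ρ σ : ℝ × ℝ → ℝ} (hf : ContDiffAt ℝ 2 f p) (h0 : f p ≠ 0)
    (hX : ∀ᶠ q in 𝓝 p, pX f q = ρ q * f q) (hT : ∀ᶠ q in 𝓝 p, pT f q = σ q * f q) :
    pT ρ p = pX σ p := by
  have hne : ∀ᶠ q in 𝓝 p, f q ≠ 0 := hf.continuousAt.eventually_ne h0
  have hρ : ρ =ᶠ[𝓝 p] fun q => pX f q / f q := by
    filter_upwards [hne, hX] with q hq hXq using eq_div_of_mul_eq hq hXq.symm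
  have hσ : σ =ᶠ[𝓝 p] fun q => pT f q / f q := by
    filter_upwards [hne, hT] with q hq hTq using eq_div_of_mul_eq hq hTq.symm
  rw [pT_congr_of_eventuallyEq hρ, pX_congr_of_eventuallyEq hσ, pT_pX_div_eq_pX_pT_div hf h0]

theorem pX_div_of_pX_eq_mul {r : ℝ} (hf : DifferentiableAt ℝ f p) (hg : DifferentiableAt ℝ g p)
    (h0 : g p ≠ 0) (hX : pX g p = r * g p) :
    pX (fun q => f q / g q) p = pX f p / g p - f p / g p * r := by
  rw [pX_div hf hg h0, hX, mul_div_cancel_right₀ r h0]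

end PartialDerivatives

theorem stmt_11_general {U : Set (ℝ × ℝ)} (hU : IsOpen U) {m1 m2 n1 n2 : ℝ × ℝ → ℝ} {lam : ℝ}
    {w : ℝ × ℝ → Fin 3 → ℝ} {φ1 φ2 φ3 : ℝ × ℝ → ℝ}
    (hφ1 : DifferentiableOn ℝ φ1 U) (hφ2 : DifferentiableOn ℝ φ2 U) (hφ3 : ContDiffOn ℝ 2 φ3 U)
    (hφ3ne : ∀ p ∈ U, φ3 p ≠ 0)
    (hx1 : ∀ p ∈ U, pX φ1 p = lam * m1 p * φ2 p + φ3 p)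
    (hx2 : ∀ p ∈ U, pX φ2 p = lam * n1 p * φ1 p + lam * m2 p * φ3 p)
    (hx3 : ∀ p ∈ U, pX φ3 p = φ1 p + lam * n2 p * φ2 p)
    (ht3 : ∀ p ∈ U, pT φ3 p = w p 0 * φ1 p + w p 1 * φ2 p + w p 2 * φ3 p)
    {α β ρ : ℝ × ℝ → ℝ}
    (hα : α = fun p => φ1 p / φ3 p)
    (hβ : β = fun p => φ2 p / φ3 p)
    (hρ : ρ = fun p => α p + lam * n2 p * β p) :
    (∀ p ∈ U, pX φ3 p = ρ p * φ3 p) ∧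
    (∀ p ∈ U, pX α p = lam * m1 p * β p + 1 - α p * ρ p) ∧
    (∀ p ∈ U, pX β p = lam * n1 p * α p + lam * m2 p - β p * ρ p) ∧
    (∀ p ∈ U, pT ρ p = pX (fun q => w q 0 * α q + w q 1 * β q + w q 2) p) := by
  have hd1 : ∀ p ∈ U, DifferentiableAt ℝ φ1 p := fun p hp => hφ1.differentiableAt (hU.mem_nhds hp)
  have hd2 : ∀ p ∈ U, DifferentiableAt ℝ φ2 p := fun p hp => hφ2.differentiableAt (hU.mem_nhds hp)
  have hc3 : ∀ p ∈ U, ContDiffAt ℝ 2 φ3 p := fun p hp => hφ3.contDiffAt (hU.mem_nhds hp)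
  have hd3 : ∀ p ∈ U, DifferentiableAt ℝ φ3 p :=
    fun p hp => (hc3 p hp).differentiableAt two_ne_zero
  have hX : ∀ p ∈ U, pX φ3 p = ρ p * φ3 p := fun p hp => by
    have h0 := hφ3ne p hp
    rw [hx3 p hp, hρ, hα, hβ]
    field_simp
  have hT : ∀ p ∈ U, pT φ3 p = (w p 0 * α p + w p 1 * β p + w p 2) * φ3 p := fun p hp => by
    have h0 := hφ3ne p hp
    rw [ht3 p hp, hα, hβ]
    field_simp
  refine ⟨hX, fun p hp => ?_, fun p hp => ?_, fun p hp => ?_⟩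
  · have h0 := hφ3ne p hp
    rw [hα, hβ, pX_div_of_pX_eq_mul (hd1 p hp) (hd3 p hp) h0 (hX p hp), hx1 p hp]
    field_simp
  · have h0 := hφ3ne p hp
    rw [hα, hβ, pX_div_of_pX_eq_mul (hd2 p hp) (hd3 p hp) h0 (hX p hp), hx2 p hp]
    field_simp
  · exact pT_eq_pX_of_eventually_eq_mul (hc3 p hp) (hφ3ne p hp)
      (eventually_of_mem (hU.mem_nhds hp) hX) (eventually_of_mem (hU.mem_nhds hp) hT)

theorem stmt_11
    (m1 m2 n1 n2 : ℝ × ℝ → ℝ)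
    (hm1 : ContDiff ℝ (⊤ : ℕ∞) m1) (hm2 : ContDiff ℝ (⊤ : ℕ∞) m2)
    (hn1 : ContDiff ℝ (⊤ : ℕ∞) n1) (hn2 : ContDiff ℝ (⊤ : ℕ∞) n2)
    (lam : ℝ)
    (V : ℝ × ℝ → Matrix (Fin 3) (Fin 3) ℝ)
    (hV : ∀ i j : Fin 3, ContDiff ℝ (⊤ : ℕ∞) (fun p => V p i j))
    (φ1 φ2 φ3 : ℝ × ℝ → ℝ)
    (hφ1 : ContDiff ℝ (⊤ : ℕ∞) φ1) (hφ2 : ContDiff ℝ (⊤ : ℕ∞) φ2) (hφ3 : ContDiff ℝ (⊤ : ℕ∞) φ3)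
    (hφ3ne : ∀ p : ℝ × ℝ, φ3 p ≠ 0)
    (hx1 : ∀ p : ℝ × ℝ, pX φ1 p = lam * m1 p * φ2 p + φ3 p)
    (hx2 : ∀ p : ℝ × ℝ, pX φ2 p = lam * n1 p * φ1 p + lam * m2 p * φ3 p)
    (hx3 : ∀ p : ℝ × ℝ, pX φ3 p = φ1 p + lam * n2 p * φ2 p)
    (ht1 : ∀ p : ℝ × ℝ, pT φ1 p = V p 0 0 * φ1 p + V p 0 1 * φ2 p + V p 0 2 * φ3 p)
    (ht2 : ∀ p : ℝ × ℝ, pT φ2 p = V p 1 0 * φ1 p + V p 1 1 * φ2 p + V p 1 2 * φ3 p)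
    (ht3 : ∀ p : ℝ × ℝ, pT φ3 p = V p 2 0 * φ1 p + V p 2 1 * φ2 p + V p 2 2 * φ3 p)
    (α β ρ : ℝ × ℝ → ℝ)
    (hα : α = fun p => φ1 p / φ3 p)
    (hβ : β = fun p => φ2 p / φ3 p)
    (hρ : ρ = fun p => α p + lam * n2 p * β p) :
    (∀ p : ℝ × ℝ, pX φ3 p = ρ p * φ3 p) ∧
    (∀ p : ℝ × ℝ, pX α p = lam * m1 p * β p + 1 - α p * ρ p) ∧
    (∀ p : ℝ × ℝ, pX β p = lam * n1 p * α p + lam * m2 p - β p * ρ p) ∧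
    (∀ p : ℝ × ℝ,
      pT ρ p = pX (fun q => V q 2 0 * α q + V q 2 1 * β q + V q 2 2) p) := by
  simpa only [Set.mem_univ, forall_const] using
    stmt_11_general isOpen_univ (w := fun p => V p 2)
      (hφ1.differentiable (by simp)).differentiableOn
      (hφ2.differentiable (by simp)).differentiableOn (contDiff_infty.1 hφ3 2).contDiffOn
      (fun p _ => hφ3ne p) (fun p _ => hx1 p) (fun p _ => hx2 p) (fun p _ => hx3 p)
      (fun p _ => ht3 p) hα hβ hρ
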